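/- The group part J of the free digroup Disgp⟨X^{±1} ∪ {e} | S⟩ (with unit the class of [e]_1) equals the set of classes of elements of Ω_e ∪ Ω_{X⁻¹}. -/

import Mathlib

/-- The alphabet X^{±1} ∪ {e}: letters x, x⁻¹ (for x ∈ X) and the symbol e. -/
inductive Letter (X : Type*) : Type _
  | pos : X → Letter X
  | neg : X → Letter X
  | e   : Letter X

/-- The free disemigroup on Y: an element [u]_m (u a nonempty word, 1 ≤ m ≤ |u|)
is encoded as the triple (prefix before the center, center letter, suffix),
so `⟨p, c, s⟩` stands for `[p·c·s]_{|p|+1}`. -/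
structure FD (Y : Type*) where
  pre : List Y
  cen : Y
  suf : List Y

namespace FD

/-- [u]_m ⊢ [v]_n = [uv]_{|u|+n}. -/
def vd {Y : Type*} (a b : FD Y) : FD Y :=
  ⟨a.pre ++ a.cen :: (a.suf ++ b.pre), b.cen, b.suf⟩

/-- [u]_m ⊣ [v]_n = [uv]_m. -/
def dv {Y : Type*} (a b : FD Y) : FD Y :=
  ⟨a.pre, a.cen, a.suf ++ b.pre ++ b.cen :: b.suf⟩

/-- The underlying associative word of [u]_m. -/
def word {Y : Type*} (a : FD Y) : List Y := a.pre ++ a.cen :: a.suf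

end FD

/-- The congruence ρ(r) on the free disemigroup generated by a set of relations r:
the smallest equivalence relation containing r compatible with ⊢ and ⊣. -/
inductive DCongr {Y : Type*} (r : FD Y → FD Y → Prop) : FD Y → FD Y → Prop
  | of {a b : FD Y} : r a b → DCongr r a b
  | refl (a : FD Y) : DCongr r a a
  | symm {a b : FD Y} : DCongr r a b → DCongr r b a
  | trans {a b c : FD Y} : DCongr r a b → DCongr r b c → DCongr r a c
  | vd {a b c d : FD Y} : DCongr r a b → DCongr r c d → DCongr r (a.vd c) (b.vd d)
  | dv {a b c d : FD Y} : DCongr r a b → DCongr r c d → DCongr r (a.dv c) (b.dv d)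

/-- The defining relations S of the free digroup:
[xx⁻¹]₂ = [e]₁, [x⁻¹x]₁ = [e]₁, [ye]₁ = [y]₁, [ey]₂ = [y]₁. -/
def rel (X : Type*) : FD (Letter X) → FD (Letter X) → Prop := fun a b =>
  (∃ x : X, a = ⟨[Letter.pos x], Letter.neg x, []⟩ ∧ b = ⟨[], Letter.e, []⟩) ∨
  (∃ x : X, a = ⟨[], Letter.neg x, [Letter.pos x]⟩ ∧ b = ⟨[], Letter.e, []⟩) ∨
  (∃ y : Letter X, a = ⟨[], y, [Letter.e]⟩ ∧ b = ⟨[], y, []⟩) ∨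
  (∃ y : Letter X, a = ⟨[Letter.e], y, []⟩ ∧ b = ⟨[], y, []⟩)

/-- The quotient disemigroup Disgp⟨X^{±1} ∪ {e} | S⟩. -/
def DQ (X : Type*) := Quot (DCongr (rel X))

/-- The class of an element of the free disemigroup in the quotient. -/
def cls {X : Type*} (a : FD (Letter X)) : DQ X := Quot.mk _ a

/-- The operation ⊢ on the quotient. -/
def DQ.vd {X : Type*} : DQ X → DQ X → DQ X :=
  Quot.map₂ FD.vd (fun a _ _ h => DCongr.vd (DCongr.refl a) h)
    (fun _ _ b h => DCongr.vd h (DCongr.refl b))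

/-- The operation ⊣ on the quotient. -/
def DQ.dv {X : Type*} : DQ X → DQ X → DQ X :=
  Quot.map₂ FD.dv (fun a _ _ h => DCongr.dv (DCongr.refl a) h)
    (fun _ _ b h => DCongr.dv h (DCongr.refl b))

/-- The class of [e]₁, the unit of the free digroup. -/
def unitE (X : Type*) : DQ X := cls ⟨[], Letter.e, []⟩

/-- Words over X^{±1} are lists of pairs (x, b), where (x, true) is x and
(x, false) is x⁻¹, as for `FreeGroup`. This converts such a pair to a `Letter`. -/
def pm {X : Type*} (p : X × Bool) : Letter X :=
  if p.2 then Letter.pos p.1 else Letter.neg p.1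

/-- A word over X^{±1} is reduced (lies in gp⟨X⟩) if it has no adjacent pair
of mutually inverse letters. -/
def Reduced {X : Type*} (L : List (X × Bool)) : Prop :=
  List.Chain' (fun a b => ¬(a.1 = b.1 ∧ a.2 = !b.2)) L

/-- Delete all occurrences of e from a word over X^{±1} ∪ {e} (the map τ). -/
def strip {X : Type*} (L : List (Letter X)) : List (X × Bool) :=
  L.flatMap fun l => match l with
    | Letter.pos x => [(x, true)]
    | Letter.neg x => [(x, false)]
    | Letter.e => []

/-- ŵ: the reduced word of w, obtained by deleting the e's and freely reducing. -/
noncomputable def hat {X : Type*} (L : List (Letter X)) : List (X × Bool) :=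
  letI := Classical.decEq X
  FreeGroup.reduce (strip L)

/-- λ(w): the (1-based) position of the first letter of w lying in X⁻¹. -/
def lam {X : Type*} (L : List (X × Bool)) : ℕ := L.findIdx (fun p => !p.2) + 1

/-- The element [L]_m of the free disemigroup determined by a word L over X^{±1}
and a center position m. -/
def toNF {X : Type*} (L : List (X × Bool)) (m : ℕ) : FD (Letter X) :=
  ⟨(L.take (m - 1)).map pm, ((L[m-1]?).map pm).getD Letter.e, (L.drop m).map pm⟩

/-- Ω_e = {[eu]₁ : u ∈ X*}. -/
def OmegaE (X : Type*) : Set (FD (Letter X)) :=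
  {a | ∃ u : List X, a = ⟨[], Letter.e, u.map Letter.pos⟩}

/-- Ω_X = {[uxv]_{|u|+1} : x ∈ X, u, v ∈ gp⟨X⟩}. -/
def OmegaX (X : Type*) : Set (FD (Letter X)) :=
  {a | ∃ (x : X) (u v : List (X × Bool)), Reduced u ∧ Reduced v ∧
    a = ⟨u.map pm, Letter.pos x, v.map pm⟩}

/-- Ω_{X⁻¹} = {[ux⁻¹v]_{|u|+1} : x ∈ X, u ∈ X*, v ∈ (X^{±1})*, ux⁻¹v reduced}. -/
def OmegaInv (X : Type*) : Set (FD (Letter X)) :=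
  {a | ∃ (x : X) (u : List X) (v : List (X × Bool)),
    Reduced ((u.map fun y => (y, true)) ++ (x, false) :: v) ∧
    a = ⟨u.map Letter.pos, Letter.neg x, v.map pm⟩}

/-- Inversion of a single letter. -/
def linv {X : Type*} : Letter X → Letter X
  | Letter.pos x => Letter.neg x
  | Letter.neg x => Letter.pos x
  | Letter.e => Letter.e

/-- The formal inverse w⁻¹ of a word over X^{±1}. -/
def invw {X : Type*} (L : List (X × Bool)) : List (X × Bool) :=
  L.reverse.map fun p => (p.1, !p.2)

/-!
Every relation of `S` preserves whether the center lies in `X`, and `e` does not lie in `X`; this is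
the only obstruction to invertibility. Indeed, to the right of a center a word matters only through
its value in the free group: words up to interchangeability as suffixes form a monoid in which `e`
is trivial and `x`, `x⁻¹` are mutually inverse. Moreover a center outside `X` can be traded for `e`,
and `e` can be moved to the front of the word. So a class with center outside `X` is determined by
its value in the free group, and reading a reduced word with the center at its first letter from
`X⁻¹` (or at an additional leading `e`, if there is none) represents every value by an element of
`Ω_e ∪ Ω_{X⁻¹}`.
-/

section FreeDisemigroup

variable {Y : Type*} {r : FD Y → FD Y → Prop} {a b : FD Y}

theorem FD.word_vd (a b : FD Y) : (a.vd b).word = a.word ++ b.word := by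
  simp [FD.vd, FD.word]

theorem FD.word_dv (a b : FD Y) : (a.dv b).word = a.word ++ b.word := by
  simp [FD.dv, FD.word]

namespace DCongr

instance : Trans (DCongr r) (DCongr r) (DCongr r) := ⟨.trans⟩

theorem cen_mem_iff {C : Set Y} (hr : ∀ a b, r a b → (a.cen ∈ C ↔ b.cen ∈ C))
    (h : DCongr r a b) : a.cen ∈ C ↔ b.cen ∈ C := by
  induction h with
  | of h => exact hr _ _ h
  | refl => rfl
  | symm _ ih => exact ih.symm
  | trans _ _ ih₁ ih₂ => exact ih₁.trans ih₂
  | vd _ _ _ ih => exact ih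
  | dv _ _ ih _ => exact ih

theorem append_left (h : DCongr r a b) (p : List Y) :
    DCongr r ⟨p ++ a.pre, a.cen, a.suf⟩ ⟨p ++ b.pre, b.cen, b.suf⟩ := by
  cases p with
  | nil => exact h
  | cons y p => exact .vd (.refl ⟨[], y, p⟩) h

theorem append_right (h : DCongr r a b) (s : List Y) :
    DCongr r ⟨a.pre, a.cen, a.suf ++ s⟩ ⟨b.pre, b.cen, b.suf ++ s⟩ := by
  cases s with
  | nil => simpa only [List.append_nil] using h
  | cons y s => simpa only [FD.dv, List.append_nil] using DCongr.dv h (.refl ⟨[], y, s⟩)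

theorem suf_append_left {s t : List Y} (h : ∀ c, DCongr r ⟨[], c, s⟩ ⟨[], c, t⟩) (c : Y)
    (u : List Y) : DCongr r ⟨[], c, u ++ s⟩ ⟨[], c, u ++ t⟩ := by
  induction u generalizing c with
  | nil => exact h c
  | cons y u ih => exact .dv (.refl ⟨[], c, []⟩) (ih y)

end DCongr

/-- The congruence on words that identifies `s` and `t` when they are interchangeable as suffixes:
`[cs]₁` and `[ct]₁` are congruent modulo `r` for every letter `c`. -/
def suffixCon (r : FD Y → FD Y → Prop) : Con (FreeMonoid Y) where
  r s t := ∀ c, DCongr r ⟨[], c, s.toList⟩ ⟨[], c, t.toList⟩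
  iseqv := ⟨fun _ _ => .refl _, fun h c => (h c).symm, fun h₁ h₂ c => (h₁ c).trans (h₂ c)⟩
  mul' {_ s' t _} hs ht c := ((hs c).append_right t.toList).trans (.suf_append_left ht c s'.toList)

theorem DCongr.suffixCon_word (h : DCongr r a b) :
    suffixCon r (.ofList a.word) (.ofList b.word) :=
  fun c => .dv (.refl ⟨[], c, []⟩) h

end FreeDisemigroup

section FreeDigroup

variable {X : Type*}

/-- The value of a letter in the free group on `X`, where `e` stands for the identity. -/
def Letter.toFreeGroup : Letter X → FreeGroup X
  | .pos x => .of x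
  | .neg x => (.of x)⁻¹
  | .e => 1

/-- The value in the free group of the underlying word of `[u]_m`; it forgets the center. -/
def FD.toFreeGroup (a : FD (Letter X)) : FreeGroup X := (a.word.map Letter.toFreeGroup).prod

theorem FD.toFreeGroup_vd (a b : FD (Letter X)) :
    (a.vd b).toFreeGroup = a.toFreeGroup * b.toFreeGroup := by
  simp only [FD.toFreeGroup, FD.word_vd, List.map_append, List.prod_append]

theorem FD.toFreeGroup_dv (a b : FD (Letter X)) :
    (a.dv b).toFreeGroup = a.toFreeGroup * b.toFreeGroup := by
  simp only [FD.toFreeGroup, FD.word_dv, List.map_append, List.prod_append]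

theorem prod_toFreeGroup_map_pm (L : List (X × Bool)) :
    ((L.map pm).map Letter.toFreeGroup).prod = FreeGroup.mk L := by
  induction L with
  | nil => rfl
  | cons p L ih =>
    obtain ⟨x, _ | _⟩ := p <;> rw [List.map_cons, List.map_cons, List.prod_cons, ih] <;> rfl

theorem DCongr.pos_neg (x : X) : DCongr (rel X) ⟨[.pos x], .neg x, []⟩ ⟨[], .e, []⟩ :=
  .of (.inl ⟨x, rfl, rfl⟩)

theorem DCongr.neg_pos (x : X) : DCongr (rel X) ⟨[], .neg x, [.pos x]⟩ ⟨[], .e, []⟩ :=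
  .of (.inr (.inl ⟨x, rfl, rfl⟩))

theorem DCongr.dv_e (y : Letter X) : DCongr (rel X) ⟨[], y, [.e]⟩ ⟨[], y, []⟩ :=
  .of (.inr (.inr (.inl ⟨y, rfl, rfl⟩)))

theorem DCongr.e_vd (y : Letter X) : DCongr (rel X) ⟨[.e], y, []⟩ ⟨[], y, []⟩ :=
  .of (.inr (.inr (.inr ⟨y, rfl, rfl⟩)))

theorem rel.cen_mem_range_pos_iff {a b : FD (Letter X)} (h : rel X a b) :
    a.cen ∈ Set.range Letter.pos ↔ b.cen ∈ Set.range Letter.pos := by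
  rcases h with ⟨x, rfl, rfl⟩ | ⟨x, rfl, rfl⟩ | ⟨y, rfl, rfl⟩ | ⟨y, rfl, rfl⟩ <;> simp

theorem suffixCon_e : suffixCon (rel X) (.of .e) 1 :=
  DCongr.dv_e

theorem suffixCon_pos_neg (x : X) : suffixCon (rel X) (.of (.pos x) * .of (.neg x)) 1 :=
  (suffixCon _).trans (DCongr.pos_neg x).suffixCon_word suffixCon_e

theorem suffixCon_neg_pos (x : X) : suffixCon (rel X) (.of (.neg x) * .of (.pos x)) 1 :=
  (suffixCon _).trans (DCongr.neg_pos x).suffixCon_word suffixCon_e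

/-- The homomorphism from the free group to words up to interchangeability as suffixes, in which
`x` and `x⁻¹` are mutually inverse. -/
def freeGroupToSuffix (X : Type*) : FreeGroup X →* (suffixCon (rel X)).Quotient :=
  (Units.coeHom _).comp <| FreeGroup.lift fun x =>
    { val := (FreeMonoid.of (.pos x) : FreeMonoid (Letter X))
      inv := (FreeMonoid.of (.neg x) : FreeMonoid (Letter X))
      val_inv := (Con.eq _).2 (suffixCon_pos_neg x)
      inv_val := (Con.eq _).2 (suffixCon_neg_pos x) }

theorem freeGroupToSuffix_toFreeGroup (y : Letter X) :
    freeGroupToSuffix X y.toFreeGroup = (FreeMonoid.of y : FreeMonoid (Letter X)) := by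
  cases y with
  | pos x => rfl
  | neg x => rfl
  | e => exact (map_one _).trans ((Con.eq _).2 suffixCon_e).symm

theorem freeGroupToSuffix_prod (w : List (Letter X)) :
    freeGroupToSuffix X (w.map Letter.toFreeGroup).prod = (FreeMonoid.ofList w) := by
  induction w with
  | nil => exact map_one _
  | cons y w ih =>
    rw [List.map_cons, List.prod_cons, map_mul, ih, freeGroupToSuffix_toFreeGroup]
    rfl

theorem suffixCon_of_prod_eq {s t : List (Letter X)}
    (h : (s.map Letter.toFreeGroup).prod = (t.map Letter.toFreeGroup).prod) :
    suffixCon (rel X) (.ofList s) (.ofList t) := by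
  rw [← Con.eq, ← freeGroupToSuffix_prod, h, freeGroupToSuffix_prod]

namespace DCongr

theorem cen_to_suf {c : Letter X} (hc : c ∉ Set.range Letter.pos) :
    DCongr (rel X) ⟨[], c, []⟩ ⟨[], .e, [c]⟩ := by
  cases c with
  | pos x => exact absurd ⟨x, rfl⟩ hc
  | e => exact (dv_e _).symm
  | neg x =>
    calc DCongr (rel X) ⟨[], .neg x, []⟩ ⟨[], .neg x, [.pos x, .neg x]⟩ :=
          (suffixCon_pos_neg x (.neg x)).symm
      DCongr (rel X) _ ⟨[], .e, [.neg x]⟩ := (neg_pos x).append_right [.neg x]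

theorem e_comm (y : Letter X) : DCongr (rel X) ⟨[y], .e, []⟩ ⟨[], .e, [y]⟩ := by
  cases y with
  | e => exact (e_vd _).trans (dv_e _).symm
  | pos x =>
    calc DCongr (rel X) ⟨[.pos x], .e, []⟩ ⟨[.pos x], .neg x, [.pos x]⟩ :=
          ((neg_pos x).append_left [.pos x]).symm
      DCongr (rel X) _ ⟨[], .e, [.pos x]⟩ := (pos_neg x).append_right [.pos x]
  | neg x =>
    calc DCongr (rel X) ⟨[.neg x], .e, []⟩ ⟨[.neg x, .pos x], .neg x, []⟩ :=
          ((pos_neg x).append_left [.neg x]).symm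
      DCongr (rel X) _ ⟨[.e], .neg x, []⟩ := .vd (neg_pos x) (.refl ⟨[], Letter.neg x, []⟩)
      DCongr (rel X) _ ⟨[], .neg x, []⟩ := e_vd _
      DCongr (rel X) _ ⟨[], .e, [.neg x]⟩ := cen_to_suf (by simp)

theorem pre_to_suf (p s : List (Letter X)) :
    DCongr (rel X) ⟨p, .e, s⟩ ⟨[], .e, p ++ s⟩ := by
  induction p with
  | nil => exact .refl _
  | cons y p ih => exact (ih.append_left [y]).trans ((e_comm y).append_right (p ++ s))

theorem word_to_suf {a : FD (Letter X)} (ha : a.cen ∉ Set.range Letter.pos) :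
    DCongr (rel X) a ⟨[], .e, a.word⟩ := by
  obtain ⟨p, c, s⟩ := a
  have move_cen : DCongr (rel X) ⟨p, c, s⟩ ⟨p, .e, c :: s⟩ := by
    simpa only [List.append_nil, List.nil_append, List.cons_append] using
      ((cen_to_suf ha).append_right s).append_left p
  exact move_cen.trans (pre_to_suf p (c :: s))

theorem of_toFreeGroup_eq {a b : FD (Letter X)} (ha : a.cen ∉ Set.range Letter.pos)
    (hb : b.cen ∉ Set.range Letter.pos) (h : a.toFreeGroup = b.toFreeGroup) :
    DCongr (rel X) a b :=
  (word_to_suf ha).trans ((suffixCon_of_prod_eq h .e).trans (word_to_suf hb).symm)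

end DCongr

theorem reduced_of_isReduced {L : List (X × Bool)} (h : FreeGroup.IsReduced L) : Reduced L :=
  List.IsChain.imp (fun _ _ hab hne => Bool.not_ne_self _ (hne.2.symm.trans (hab hne.1))) h

theorem eq_map_pos_or_exists_first_neg (L : List (X × Bool)) :
    (∃ u : List X, L = u.map fun y => (y, true)) ∨
      ∃ (u : List X) (x : X) (v : List (X × Bool)),
        L = (u.map fun y => (y, true)) ++ (x, false) :: v := by
  induction L with
  | nil => exact .inl ⟨[], rfl⟩
  | cons p L ih =>
    obtain ⟨x, _ | _⟩ := p
    · exact .inr ⟨[], x, L, rfl⟩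
    · rcases ih with ⟨u, rfl⟩ | ⟨u, y, v, rfl⟩
      · exact .inl ⟨x :: u, rfl⟩
      · exact .inr ⟨x :: u, y, v, rfl⟩

theorem map_pm_map_true (u : List X) : (u.map fun y => (y, true)).map pm = u.map Letter.pos :=
  List.map_map

theorem exists_mem_omega_toFreeGroup_eq (g : FreeGroup X) :
    ∃ a ∈ OmegaE X ∪ OmegaInv X, a.toFreeGroup = g := by
  classical
  have hg : ((g.toWord.map pm).map Letter.toFreeGroup).prod = g :=
    (prod_toFreeGroup_map_pm _).trans FreeGroup.mk_toWord
  rcases eq_map_pos_or_exists_first_neg g.toWord with ⟨u, hu⟩ | ⟨u, x, v, hu⟩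
  · refine ⟨⟨[], .e, u.map .pos⟩, .inl ⟨u, rfl⟩, ?_⟩
    rw [hu, map_pm_map_true] at hg
    exact (one_mul _).trans hg
  · refine ⟨⟨u.map .pos, .neg x, v.map pm⟩, .inr ⟨x, u, v, ?_, rfl⟩, ?_⟩
    · exact hu ▸ reduced_of_isReduced FreeGroup.isReduced_toWord
    · rwa [hu, List.map_append, map_pm_map_true] at hg

theorem cen_notMem_range_pos_of_mem_omega {a : FD (Letter X)} (h : a ∈ OmegaE X ∪ OmegaInv X) :
    a.cen ∉ Set.range Letter.pos := by
  rcases h with ⟨u, rfl⟩ | ⟨x, u, v, -, rfl⟩ <;> simp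

variable {a b : FD (Letter X)}

theorem cls_eq_cls_iff : cls a = cls b ↔ DCongr (rel X) a b :=
  Quot.eq.trans (Equivalence.eqvGen_iff ⟨.refl, .symm, .trans⟩)

theorem cen_mem_range_pos_iff_of_cls_eq (h : cls a = cls b) :
    a.cen ∈ Set.range Letter.pos ↔ b.cen ∈ Set.range Letter.pos :=
  (cls_eq_cls_iff.1 h).cen_mem_iff fun _ _ => rel.cen_mem_range_pos_iff

theorem cls_eq_unitE (ha : a.cen ∉ Set.range Letter.pos) (h : a.toFreeGroup = 1) :
    cls a = unitE X :=
  cls_eq_cls_iff.2 (.of_toFreeGroup_eq ha (by simp) (h.trans (one_mul 1).symm))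

theorem exists_inverse_cls_iff :
    (∃ a : DQ X, DQ.vd a (cls b) = unitE X ∧ DQ.dv (cls b) a = unitE X) ↔
      b.cen ∉ Set.range Letter.pos := by
  constructor
  · rintro ⟨a, hab, -⟩
    obtain ⟨a, rfl⟩ := Quot.exists_rep a
    exact (cen_mem_range_pos_iff_of_cls_eq hab).not.2 (by simp)
  · intro hb
    obtain ⟨a, -, ha⟩ := exists_mem_omega_toFreeGroup_eq b.toFreeGroup⁻¹
    refine ⟨cls a, cls_eq_unitE (a := a.vd b) hb ?_, cls_eq_unitE (a := b.dv a) hb ?_⟩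
    · rw [FD.toFreeGroup_vd, ha, inv_mul_cancel]
    · rw [FD.toFreeGroup_dv, ha, mul_inv_cancel]

theorem cls_mem_image_omega_iff :
    cls b ∈ cls '' (OmegaE X ∪ OmegaInv X) ↔ b.cen ∉ Set.range Letter.pos := by
  constructor
  · rintro ⟨a, ha, hab⟩
    exact (cen_mem_range_pos_iff_of_cls_eq hab).not.1 (cen_notMem_range_pos_of_mem_omega ha)
  · intro hb
    obtain ⟨a, ha, hab⟩ := exists_mem_omega_toFreeGroup_eq b.toFreeGroup
    exact ⟨a, ha, cls_eq_cls_iff.2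
      (.of_toFreeGroup_eq (cen_notMem_range_pos_of_mem_omega ha) hb hab)⟩

end FreeDigroup

/-- The group part J = {a† : a ∈ D} of the free digroup Disgp⟨X^{±1} ∪ {e} | S⟩
(i.e. the set of all two-sided inverses) equals the set of classes of elements
of Ω_e ∪ Ω_{X⁻¹}. -/
theorem group_part_eq (X : Type*) :
    {b : DQ X | ∃ a : DQ X, DQ.vd a b = unitE X ∧ DQ.dv b a = unitE X} =
      cls '' (OmegaE X ∪ OmegaInv X) := by
  ext b
  obtain ⟨b, rfl⟩ := Quot.exists_rep b
  exact exists_inverse_cls_iff.trans cls_mem_image_omega_iff.symm
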